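/- Let Ã be a symmetric N×N real matrix, W an H×H real matrix, V an F×H real matrix, and X an N×F real matrix, with K = ρ(Ã) · ‖W‖₂ < 1. Let H* be the unique fixed point of the reservoir map Φ(M) = tanh(Ã M W + X V), let H_t be the iterates H_{t+1} = Φ(H_t) from an arbitrary initial condition H₀, and H₁ = Φ(H₀). Then for every t ≥ 0, ‖H* − H_t‖_F ≤ (K^t / (1 − K)) · ‖H₁ − H₀‖_F. -/

import Mathlib

noncomputable def frobNorm {m n : Type*} [Fintype m] [Fintype n]
    (M : Matrix m n ℝ) : ℝ :=
  Real.sqrt (∑ i, ∑ j, (M i j) ^ 2)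

noncomputable def specNorm {m n : ℕ} (M : Matrix (Fin m) (Fin n) ℝ) : ℝ :=
  ‖LinearMap.toContinuousLinearMap (Matrix.toEuclideanLin M)‖

noncomputable def specRad {n : ℕ} (A : Matrix (Fin n) (Fin n) ℝ)
    (hA : A.IsHermitian) : ℝ :=
  ⨆ i, |hA.eigenvalues i|

noncomputable def mtanh {m n : Type*} (M : Matrix m n ℝ) : Matrix m n ℝ :=
  Matrix.of fun i j => Real.tanh (M i j)

noncomputable def resMap {N F Hd : ℕ} (Atil : Matrix (Fin N) (Fin N) ℝ)
    (W : Matrix (Fin Hd) (Fin Hd) ℝ) (V : Matrix (Fin F) (Fin Hd) ℝ)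
    (X : Matrix (Fin N) (Fin F) ℝ) (M : Matrix (Fin N) (Fin Hd) ℝ) :
    Matrix (Fin N) (Fin Hd) ℝ :=
  mtanh (Atil * M * W + X * V)

/-!
Applying `‖A v‖ ≤ ‖A‖₂ ‖v‖` to each column of `M` gives `‖A M‖_F ≤ ‖A‖₂ ‖M‖_F`, and taking adjoints
gives the same for multiplication on the right. As `tanh` is 1-Lipschitz, the reservoir map is
therefore Lipschitz for the Frobenius distance with constant `‖A‖₂ ‖W‖₂`, and the bound is the
a priori estimate of the Banach fixed point theorem. A symmetric matrix is orthogonally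
diagonalizable, hence its spectral norm is its spectral radius.
-/

open scoped Matrix NNReal

section SpectralNorm

open scoped Matrix.Norms.L2Operator

variable {m n 𝕜 : Type*} [Fintype m] [Fintype n] [DecidableEq n] [RCLike 𝕜]

/-- The spectral norm of a matrix, as a plain function so that it can be combined with `‖·‖₊` for
the Frobenius norm: the two norm instances on `Matrix m n 𝕜` cannot be open together. It is valued
in `ℝ≥0` in order to serve as a Lipschitz constant. -/
noncomputable def l2OpNNNorm (A : Matrix m n 𝕜) : ℝ≥0 := ‖A‖₊

theorem l2OpNNNorm_conjTranspose [DecidableEq m] (A : Matrix m n 𝕜) :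
    l2OpNNNorm Aᴴ = l2OpNNNorm A :=
  Matrix.l2_opNNNorm_conjTranspose A

theorem nnnorm_toLp_mulVec_le (A : Matrix m n 𝕜) (v : n → 𝕜) :
    ‖WithLp.toLp 2 (A *ᵥ v)‖₊ ≤ l2OpNNNorm A * ‖WithLp.toLp 2 v‖₊ :=
  Matrix.l2_opNNNorm_mulVec A (WithLp.toLp 2 v)

theorem pi_norm_eq_iSup_norm {ι E : Type*} [Fintype ι] [SeminormedAddGroup E] (v : ι → E) :
    ‖v‖ = ⨆ i, ‖v i‖ := by
  rw [Pi.norm_def, Finset.sup_univ_eq_ciSup, NNReal.coe_iSup]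
  simp only [coe_nnnorm]

theorem l2OpNNNorm_eq_iSup_abs_eigenvalues {A : Matrix n n 𝕜} (hA : A.IsHermitian) :
    (l2OpNNNorm A : ℝ) = ⨆ i, |hA.eigenvalues i| := by
  have norm_eq_diagonal :
      ‖A‖ = ‖(Matrix.diagonal (RCLike.ofReal ∘ hA.eigenvalues) : Matrix n n 𝕜)‖ := by
    conv_lhs => rw [hA.spectral_theorem, Unitary.conjStarAlgAut_apply]
    rw [CStarRing.norm_mul_mem_unitary _ (Unitary.star_mem hA.eigenvectorUnitary.2),
      CStarRing.norm_coe_unitary_mul]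
  rw [l2OpNNNorm, coe_nnnorm, norm_eq_diagonal, Matrix.l2_opNorm_diagonal, pi_norm_eq_iSup_norm]
  simp only [Function.comp_apply, RCLike.norm_ofReal]

end SpectralNorm

section Frobenius

open scoped Matrix.Norms.Frobenius

variable {l m n p 𝕜 : Type*} [Fintype l] [Fintype m] [Fintype n] [Fintype p] [RCLike 𝕜]

theorem frobenius_nnnorm_sq {α : Type*} [SeminormedAddCommGroup α] (M : Matrix m n α) :
    ‖M‖₊ ^ 2 = ∑ i, ∑ j, ‖M i j‖₊ ^ 2 := by
  rw [Matrix.frobenius_nnnorm_def, ← NNReal.sqrt_eq_rpow, NNReal.sq_sqrt]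
  simp only [NNReal.rpow_two]

theorem frobenius_nnnorm_sq_eq_sum_col (M : Matrix m n 𝕜) :
    ‖M‖₊ ^ 2 = ∑ j, ‖WithLp.toLp 2 (M.col j)‖₊ ^ 2 := by
  rw [frobenius_nnnorm_sq, Finset.sum_comm]
  simp only [EuclideanSpace.nnnorm_eq, NNReal.sq_sqrt, Matrix.col_apply]

theorem frobenius_nnnorm_mul_le_l2OpNNNorm_mul [DecidableEq m]
    (A : Matrix l m 𝕜) (M : Matrix m n 𝕜) : ‖A * M‖₊ ≤ l2OpNNNorm A * ‖M‖₊ := by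
  refine le_of_pow_le_pow_left₀ two_ne_zero zero_le ?_
  calc
    ‖A * M‖₊ ^ 2 = ∑ j, ‖WithLp.toLp 2 (A *ᵥ M.col j)‖₊ ^ 2 := frobenius_nnnorm_sq_eq_sum_col _
    _ ≤ ∑ j, (l2OpNNNorm A * ‖WithLp.toLp 2 (M.col j)‖₊) ^ 2 := by
      gcongr with j
      exact nnnorm_toLp_mulVec_le A (M.col j)
    _ = (l2OpNNNorm A * ‖M‖₊) ^ 2 := by
      simp only [mul_pow, ← Finset.mul_sum, frobenius_nnnorm_sq_eq_sum_col]

theorem frobenius_nnnorm_mul_le_mul_l2OpNNNorm [DecidableEq n]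
    (M : Matrix l m 𝕜) (B : Matrix m n 𝕜) : ‖M * B‖₊ ≤ ‖M‖₊ * l2OpNNNorm B := by
  classical
  have h := frobenius_nnnorm_mul_le_l2OpNNNorm_mul Bᴴ Mᴴ
  rwa [← Matrix.conjTranspose_mul, Matrix.frobenius_nnnorm_conjTranspose,
    Matrix.frobenius_nnnorm_conjTranspose, l2OpNNNorm_conjTranspose, mul_comm] at h

theorem lipschitzWith_matrix_mul_mul_add [DecidableEq m] [DecidableEq p]
    (A : Matrix l m 𝕜) (W : Matrix n p 𝕜) (B : Matrix l p 𝕜) :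
    LipschitzWith (l2OpNNNorm A * l2OpNNNorm W) fun M : Matrix m n 𝕜 ↦ A * M * W + B := by
  refine .of_dist_le_mul fun P Q ↦ ?_
  change nndist (A * P * W + B) (A * Q * W + B) ≤ l2OpNNNorm A * l2OpNNNorm W * nndist P Q
  calc
    nndist (A * P * W + B) (A * Q * W + B) = ‖A * (P - Q) * W‖₊ := by
      rw [nndist_add_right, nndist_eq_nnnorm, Matrix.mul_sub, Matrix.sub_mul]
    _ ≤ ‖A * (P - Q)‖₊ * l2OpNNNorm W := frobenius_nnnorm_mul_le_mul_l2OpNNNorm _ _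
    _ ≤ l2OpNNNorm A * ‖P - Q‖₊ * l2OpNNNorm W := by
      gcongr
      exact frobenius_nnnorm_mul_le_l2OpNNNorm_mul _ _
    _ = l2OpNNNorm A * l2OpNNNorm W * nndist P Q := by rw [nndist_eq_nnnorm, mul_right_comm]

theorem lipschitzWith_matrix_map {α β : Type*} [SeminormedAddCommGroup α]
    [SeminormedAddCommGroup β] {L : ℝ≥0} {σ : α → β} (hσ : LipschitzWith L σ) :
    LipschitzWith L fun M : Matrix m n α ↦ M.map σ := by
  refine .of_dist_le_mul fun P Q ↦ ?_
  change nndist (P.map σ) (Q.map σ) ≤ L * nndist P Q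
  refine le_of_pow_le_pow_left₀ two_ne_zero zero_le ?_
  simp only [nndist_eq_nnnorm, mul_pow, frobenius_nnnorm_sq, Finset.mul_sum]
  gcongr with i _ j
  rw [← mul_pow]
  gcongr
  simpa only [nndist_eq_nnnorm, Matrix.sub_apply, Matrix.map_apply] using
    hσ.nndist_le (P i j) (Q i j)

end Frobenius

section Reservoir

open scoped Matrix.Norms.Frobenius

variable {m n 𝕜 : Type*} [Fintype m] [Fintype n] [RCLike 𝕜]

/-- The reservoir map with an arbitrary activation function `σ` and with the input term `X V`
abstracted to a bias matrix `B`. -/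
def reservoirMap (σ : 𝕜 → 𝕜) (A : Matrix m m 𝕜) (W : Matrix n n 𝕜) (B M : Matrix m n 𝕜) :
    Matrix m n 𝕜 :=
  (A * M * W + B).map σ

variable [DecidableEq m] [DecidableEq n] {L : ℝ≥0} {σ : 𝕜 → 𝕜}

theorem lipschitzWith_reservoirMap (hσ : LipschitzWith L σ) (A : Matrix m m 𝕜)
    (W : Matrix n n 𝕜) (B : Matrix m n 𝕜) :
    LipschitzWith (L * (l2OpNNNorm A * l2OpNNNorm W)) (reservoirMap σ A W B) :=
  (lipschitzWith_matrix_map hσ).comp (lipschitzWith_matrix_mul_mul_add A W B)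

theorem reservoir_iterates_dist_le_first_step_general (hσ : LipschitzWith L σ)
    {A : Matrix m m 𝕜} {W : Matrix n n 𝕜} {B : Matrix m n 𝕜}
    (hK : (L * (l2OpNNNorm A * l2OpNNNorm W) : ℝ) < 1) {Hstar : Matrix m n 𝕜}
    (hfix : Function.IsFixedPt (reservoirMap σ A W B) Hstar) (H0 : Matrix m n 𝕜) (t : ℕ) :
    ‖Hstar - (reservoirMap σ A W B)^[t] H0‖ ≤
      (L * (l2OpNNNorm A * l2OpNNNorm W) : ℝ) ^ t / (1 - L * (l2OpNNNorm A * l2OpNNNorm W)) *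
        ‖reservoirMap σ A W B H0 - H0‖ := by
  have : CompleteSpace (Matrix m n 𝕜) := FiniteDimensional.complete 𝕜 _
  have hcontr : ContractingWith _ (reservoirMap σ A W B) :=
    ⟨mod_cast hK, lipschitzWith_reservoirMap hσ A W B⟩
  have hapriori := hcontr.apriori_dist_iterate_fixedPoint_le H0 t
  rw [← hcontr.fixedPoint_unique hfix, dist_comm, dist_comm H0, dist_eq_norm, dist_eq_norm,
    mul_div_assoc, mul_comm] at hapriori
  exact_mod_cast hapriori

end Reservoir

theorem hasDerivAt_tanh (x : ℝ) : HasDerivAt Real.tanh (1 / Real.cosh x ^ 2) x := by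
  have h := (Real.hasDerivAt_sinh x).fun_div (Real.hasDerivAt_cosh x) (Real.cosh_pos x).ne'
  simpa only [← Real.tanh_eq_sinh_div_cosh, ← sq, Real.cosh_sq_sub_sinh_sq] using h

theorem lipschitzWith_tanh : LipschitzWith 1 Real.tanh := by
  refine lipschitzWith_of_nnnorm_deriv_le (fun x ↦ (hasDerivAt_tanh x).differentiableAt) fun x ↦ ?_
  rw [(hasDerivAt_tanh x).deriv, ← NNReal.coe_le_coe, coe_nnnorm, NNReal.coe_one,
    Real.norm_of_nonneg (by positivity)]
  exact div_le_one_of_le₀ (one_le_pow₀ (Real.one_le_cosh x)) (by positivity)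

open scoped Matrix.Norms.Frobenius in
theorem frobNorm_eq_frobenius_norm {m n : Type*} [Fintype m] [Fintype n] (M : Matrix m n ℝ) :
    frobNorm M = ‖M‖ := by
  rw [frobNorm, Matrix.frobenius_norm_def, Real.sqrt_eq_rpow]
  simp only [Real.rpow_two, Real.norm_eq_abs, sq_abs]

theorem specNorm_eq_l2OpNNNorm {m n : ℕ} (M : Matrix (Fin m) (Fin n) ℝ) :
    specNorm M = l2OpNNNorm M :=
  rfl

theorem specRad_eq_l2OpNNNorm {n : ℕ} {A : Matrix (Fin n) (Fin n) ℝ} (hA : A.IsHermitian) :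
    specRad A hA = l2OpNNNorm A :=
  (l2OpNNNorm_eq_iSup_abs_eigenvalues hA).symm

theorem resMap_eq_reservoirMap {N F Hd : ℕ} (Atil : Matrix (Fin N) (Fin N) ℝ)
    (W : Matrix (Fin Hd) (Fin Hd) ℝ) (V : Matrix (Fin F) (Fin Hd) ℝ)
    (X : Matrix (Fin N) (Fin F) ℝ) :
    resMap Atil W V X = reservoirMap Real.tanh Atil W (X * V) :=
  rfl

/-- Inequality (14): ‖H* − H_t‖_F ≤ (K^t/(1 − K)) ‖H₁ − H₀‖_F. -/
theorem reservoir_iterates_dist_le_first_step {N F Hd : ℕ}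
    (Atil : Matrix (Fin N) (Fin N) ℝ) (hA : Atil.IsHermitian)
    (W : Matrix (Fin Hd) (Fin Hd) ℝ) (V : Matrix (Fin F) (Fin Hd) ℝ)
    (X : Matrix (Fin N) (Fin F) ℝ)
    (hK : specRad Atil hA * specNorm W < 1)
    (Hstar : Matrix (Fin N) (Fin Hd) ℝ)
    (hfix : resMap Atil W V X Hstar = Hstar)
    (H0 : Matrix (Fin N) (Fin Hd) ℝ) (t : ℕ) :
    frobNorm (Hstar - (resMap Atil W V X)^[t] H0)
      ≤ (specRad Atil hA * specNorm W) ^ t / (1 - specRad Atil hA * specNorm W)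
          * frobNorm (resMap Atil W V X H0 - H0) := by
  simp only [specRad_eq_l2OpNNNorm, specNorm_eq_l2OpNNNorm, frobNorm_eq_frobenius_norm,
    resMap_eq_reservoirMap] at hK hfix ⊢
  simpa only [NNReal.coe_one, one_mul] using reservoir_iterates_dist_le_first_step_general
    lipschitzWith_tanh (by simpa only [NNReal.coe_one, one_mul] using hK) hfix H0 t
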